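/- arXiv:2603.14447 — 3 statements merged into one kernel-verified Lean document; each statement's English description precedes it below -/
import Mathlib

section
/- Let n ≥ 1 and let F : ℝⁿ → ℝⁿ be continuous and dissipative, i.e. ⟪F x − F y, x − y⟫ ≤ 0 for all x, y ∈ ℝⁿ. Then for every ε > 0 and every y ∈ ℝⁿ there exists a unique x ∈ ℝⁿ such that x − ε·F(x) = y. -/
/-!
Solving `x - ε • F x = y` means finding a fixed point of `G x = ε • F x + y`, which is again
dissipative and continuous. Dissipativity of `G` says that `G z - z ↦ G z + z` is well defined and
1-Lipschitz, so by Kirszbraun's theorem it extends to the point `0` by some value `2 • x`. Then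
`x` lies in every ball with diameter `[z, G z]`, that is, `⟪G z - x, z - x⟫ ≤ 0` for all `z`, and
letting `z` tend to `x` along the direction `G x - x` gives `G x = x`.
-/

open Metric Set
open scoped RealInnerProductSpace

section Kirszbraun

variable {ι E E' : Type*} [NormedAddCommGroup E] [InnerProductSpace ℝ E]
  [NormedAddCommGroup E'] [InnerProductSpace ℝ E']

theorem sum_mul_norm_sub_sq_eq_add_norm_sum_smul_sub_sq [Fintype ι] {w : ι → ℝ}
    (hw : ∑ i, w i = 1) (p : ι → E) (c : E) :
    ∑ i, w i * ‖c - p i‖ ^ 2 =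
      (∑ i, ∑ j, w i * w j * ‖p i - p j‖ ^ 2) / 2 + ‖c - ∑ i, w i • p i‖ ^ 2 := by
  set m := ∑ i, w i • p i with hm
  have inner_mean (v : E) : ∑ i, w i * ⟪v, p i⟫ = ⟪v, m⟫ := by
    simp only [hm, inner_sum, real_inner_smul_right]
  have sum_sq_sub (v : E) :
      ∑ i, w i * ‖v - p i‖ ^ 2 = ‖v‖ ^ 2 - 2 * ⟪v, m⟫ + ∑ i, w i * ‖p i‖ ^ 2 := by
    simp only [norm_sub_sq_real, mul_add, mul_sub, Finset.sum_add_distrib, Finset.sum_sub_distrib,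
      mul_left_comm _ (2 : ℝ), ← Finset.mul_sum, inner_mean, ← Finset.sum_mul, hw, one_mul]
  have sum_sum_sq_sub : ∑ i, ∑ j, w i * w j * ‖p i - p j‖ ^ 2 =
      2 * (∑ i, w i * ‖p i‖ ^ 2 - ‖m‖ ^ 2) := by
    simp only [mul_assoc, ← Finset.mul_sum, sum_sq_sub, real_inner_comm m]
    simp only [mul_add, mul_sub, Finset.sum_add_distrib, Finset.sum_sub_distrib,
      mul_left_comm _ (2 : ℝ), ← Finset.mul_sum, inner_mean, ← Finset.sum_mul, hw,
      real_inner_self_eq_norm_sq]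
    ring
  rw [sum_sq_sub, sum_sum_sq_sub, norm_sub_sq_real]
  ring

theorem sum_mul_norm_sum_smul_sub_sq_le [Fintype ι] {w : ι → ℝ} (hw : w ∈ stdSimplex ℝ ι)
    {p : ι → E'} {q : ι → E} (hpq : ∀ i j, ‖q i - q j‖ ≤ ‖p i - p j‖) (c : E') :
    ∑ i, w i * ‖∑ j, w j • q j - q i‖ ^ 2 ≤ ∑ i, w i * ‖c - p i‖ ^ 2 := by
  have pairwise_le :
      ∑ i, ∑ j, w i * w j * ‖q i - q j‖ ^ 2 ≤ ∑ i, ∑ j, w i * w j * ‖p i - p j‖ ^ 2 := by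
    gcongr with i _ j _
    · exact mul_nonneg (hw.1 i) (hw.1 j)
    · exact hpq i j
  rw [sum_mul_norm_sub_sq_eq_add_norm_sum_smul_sub_sq hw.2,
    sum_mul_norm_sub_sq_eq_add_norm_sum_smul_sub_sq hw.2, sub_self, norm_zero]
  linarith [sq_nonneg ‖c - ∑ i, w i • p i‖]

theorem convexOn_sum_mul_norm_sub_sq_sub [Fintype ι] {w : ι → ℝ} (hw : ∑ i, w i = 1) (q : ι → E)
    (b : ι → ℝ) : ConvexOn ℝ univ fun x ↦ ∑ i, w i * (‖x - q i‖ ^ 2 - b i) := by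
  have convexOn_norm_sub_sq : ConvexOn ℝ univ fun x ↦ ‖x - ∑ i, w i • q i‖ ^ 2 := by
    simpa only [dist_eq_norm, Pi.pow_def] using
      (convexOn_univ_dist (∑ i, w i • q i)).pow (fun _ _ ↦ dist_nonneg) 2
  simp only [mul_sub, Finset.sum_sub_distrib, sum_mul_norm_sub_sq_eq_add_norm_sum_smul_sub_sq hw,
    add_sub_right_comm]
  exact (convexOn_const _ convex_univ).add convexOn_norm_sub_sq

theorem exists_isSaddlePointOn_sum_mul_norm_sub_sq_sub [Fintype ι] [Nonempty ι] (q : ι → E)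
    (b : ι → ℝ) :
    ∃ x ∈ convexHull ℝ (range q), ∃ w ∈ stdSimplex ℝ ι,
      IsSaddlePointOn (convexHull ℝ (range q)) (stdSimplex ℝ ι)
        (fun x w ↦ ∑ i, w i * (‖x - q i‖ ^ 2 - b i)) x w := by
  classical
  refine Sion.exists_isSaddlePointOn (range_nonempty q).convexHull (convex_convexHull ℝ _)
    ((finite_range q).isCompact_convexHull ℝ)
    (fun w _ ↦ Continuous.lowerSemicontinuous (by fun_prop) |>.lowerSemicontinuousOn _)
    (fun w hw ↦ ?_) (convex_stdSimplex ℝ ι) ⟨_, single_mem_stdSimplex ℝ (Classical.arbitrary ι)⟩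
    (isCompact_stdSimplex ℝ ι)
    (fun x _ ↦ Continuous.upperSemicontinuous (by fun_prop) |>.upperSemicontinuousOn _)
    (fun x _ ↦ ?_)
  · exact ((convexOn_sum_mul_norm_sub_sq_sub hw.2 q b).subset (subset_univ _)
      (convex_convexHull ℝ _)).quasiconvexOn
  · exact ((Fintype.linearCombination ℝ fun i ↦ ‖x - q i‖ ^ 2 - b i).concaveOn
      (convex_stdSimplex ℝ ι)).quasiconcaveOn

theorem exists_forall_norm_sub_le_of_forall_norm_sub_le_of_finite
    [Finite ι] {p : ι → E'} {q : ι → E}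
    (hpq : ∀ i j, ‖q i - q j‖ ≤ ‖p i - p j‖) (c : E') :
    ∃ x, ∀ i, ‖x - q i‖ ≤ ‖c - p i‖ := by
  classical
  cases nonempty_fintype ι
  rcases isEmpty_or_nonempty ι with _ | _
  · exact ⟨0, isEmptyElim⟩
  -- Minimise `max i, ‖x - q i‖² - ‖c - p i‖²`: by the minimax theorem it suffices to make each
  -- weighted average of these differences nonpositive, which the weighted mean of `q` does.
  obtain ⟨x, -, w, hw, hsaddle⟩ :=
    exists_isSaddlePointOn_sum_mul_norm_sub_sq_sub q fun i ↦ ‖c - p i‖ ^ 2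
  have mean_mem : ∑ j, w j • q j ∈ convexHull ℝ (range q) :=
    (convex_convexHull ℝ _).sum_mem (fun j _ ↦ hw.1 j) hw.2
      fun j _ ↦ subset_convexHull ℝ _ (mem_range_self j)
  refine ⟨x, fun i ↦ ?_⟩
  have sq_sub_sq_le : ‖x - q i‖ ^ 2 - ‖c - p i‖ ^ 2 ≤
      ∑ k, w k * (‖∑ j, w j • q j - q k‖ ^ 2 - ‖c - p k‖ ^ 2) := by
    simpa [Pi.single_apply] using
      hsaddle _ mean_mem _ (single_mem_stdSimplex ℝ i)
  simp only [mul_sub, Finset.sum_sub_distrib] at sq_sub_sq_le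
  refine le_of_sq_le_sq ?_ (norm_nonneg _)
  linarith [sum_mul_norm_sum_smul_sub_sq_le hw hpq c]

theorem nonempty_iInter_closedBall [CompleteSpace E] (c : ι → E) (r : ι → ℝ)
    (h : ∀ s : Finset ι, (⋂ i ∈ s, closedBall (c i) (r i)).Nonempty) :
    (⋂ i, closedBall (c i) (r i)).Nonempty := by
  rcases isEmpty_or_nonempty ι with _ | ⟨⟨i₀⟩⟩
  · simp
  let dualBall (i : ι) : Set (WeakDual ℝ E) :=
    WeakDual.toStrongDual ⁻¹' closedBall (InnerProductSpace.toDual ℝ E (c i)) (r i)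
  have finite_inter (s : Finset ι) : (dualBall i₀ ∩ ⋂ i ∈ s, dualBall i).Nonempty := by
    classical
    obtain ⟨x, hx⟩ := h (insert i₀ s)
    refine ⟨StrongDual.toWeakDual (InnerProductSpace.toDual ℝ E x), ?_⟩
    simpa [dualBall] using hx
  obtain ⟨φ, -, hφ⟩ := (WeakDual.isCompact_closedBall _ _).inter_iInter_nonempty dualBall
    (fun _ ↦ WeakDual.isClosed_closedBall _ _) finite_inter
  obtain ⟨x, hx⟩ := (InnerProductSpace.toDual ℝ E).surjective (WeakDual.toStrongDual φ)
  refine ⟨x, ?_⟩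
  simpa [dualBall, ← hx] using hφ

/-- **Kirszbraun's theorem**, for the extension to one more point. -/
theorem exists_forall_norm_sub_le_of_forall_norm_sub_le [CompleteSpace E] {p : ι → E'} {q : ι → E}
    (hpq : ∀ i j, ‖q i - q j‖ ≤ ‖p i - p j‖) (c : E') :
    ∃ x, ∀ i, ‖x - q i‖ ≤ ‖c - p i‖ := by
  obtain ⟨x, hx⟩ := nonempty_iInter_closedBall q (fun i ↦ ‖c - p i‖) fun s ↦ by
    obtain ⟨x, hx⟩ :=
      exists_forall_norm_sub_le_of_forall_norm_sub_le_of_finite (fun i j : s ↦ hpq i j) c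
    exact ⟨x, mem_iInter₂.2 fun i hi ↦ mem_closedBall_iff_norm.2 (hx ⟨i, hi⟩)⟩
  exact ⟨x, fun i ↦ mem_closedBall_iff_norm.1 (mem_iInter.1 hx i)⟩

end Kirszbraun

section Dissipative

variable {E : Type*} [NormedAddCommGroup E] [InnerProductSpace ℝ E] {F : E → E}

theorem norm_add_le_norm_sub_iff_inner_nonpos {x y : E} : ‖x + y‖ ≤ ‖x - y‖ ↔ ⟪x, y⟫ ≤ 0 := by
  rw [← sq_le_sq₀ (norm_nonneg _) (norm_nonneg _), norm_add_sq_real, norm_sub_sq_real]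
  constructor <;> intro h <;> linarith

/-- Dissipative maps, the negatives of monotone operators in the sense of Minty and Browder. -/
def IsDissipative (F : E → E) : Prop :=
  ∀ x y, ⟪F x - F y, x - y⟫ ≤ 0

/-- Hemicontinuity of a single-valued operator: continuity along each line, for the weak topology
on the target. -/
def IsHemicontinuous (F : E → E) : Prop :=
  ∀ x v w, Continuous fun t : ℝ ↦ ⟪F (x + t • v), w⟫

namespace IsHemicontinuous

theorem of_continuous (hF : Continuous F) : IsHemicontinuous F :=
  fun _ _ _ ↦ by fun_prop

theorem smul_add_const (hF : IsHemicontinuous F) (a : ℝ) (b : E) :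
    IsHemicontinuous fun x ↦ a • F x + b := fun x v w ↦ by
  simpa only [inner_add_left, real_inner_smul_left] using
    ((hF x v w).const_mul a).add_const ⟪b, w⟫

theorem eq_of_forall_inner_sub_nonpos (hF : IsHemicontinuous F) {x w : E}
    (h : ∀ z, ⟪F z - w, z - x⟫ ≤ 0) : F x = w := by
  set v := F x - w with hv
  have inner_le_of_pos : ∀ t ∈ Ioi (0 : ℝ), ⟪F (x + t • v), v⟫ ≤ ⟪w, v⟫ := fun t ht ↦ by
    have := h (x + t • v)
    rw [add_sub_cancel_left, real_inner_smul_right] at this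
    simpa only [inner_sub_left, sub_nonpos] using nonpos_of_mul_nonpos_right this ht
  have inner_le_at_zero : ⟪F x, v⟫ ≤ ⟪w, v⟫ := by
    simpa using le_of_tendsto (((hF x v v).tendsto 0).mono_left nhdsWithin_le_nhds)
      (eventually_nhdsWithin_of_forall inner_le_of_pos)
  rw [← sub_eq_zero, ← hv, ← real_inner_self_nonpos, hv, inner_sub_left]
  exact sub_nonpos.2 inner_le_at_zero

end IsHemicontinuous

namespace IsDissipative

theorem smul_add_const (hF : IsDissipative F) {a : ℝ} (ha : 0 ≤ a) (b : E) :
    IsDissipative fun x ↦ a • F x + b := fun x y ↦ by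
  rw [add_sub_add_right_eq_sub, ← smul_sub, real_inner_smul_left]
  exact mul_nonpos_of_nonneg_of_nonpos ha (hF x y)

theorem eq_of_isFixedPt (hF : IsDissipative F) {x y : E} (hx : F x = x) (hy : F y = y) :
    x = y := by
  have := hF x y
  rw [hx, hy] at this
  exact sub_eq_zero.1 (real_inner_self_nonpos.1 this)

theorem exists_forall_inner_sub_nonpos [CompleteSpace E] (hF : IsDissipative F) :
    ∃ x, ∀ z, ⟪F z - x, z - x⟫ ≤ 0 := by
  have norm_add_sub_le (z z' : E) : ‖(F z + z) - (F z' + z')‖ ≤ ‖(F z - z) - (F z' - z')‖ := by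
    rw [add_sub_add_comm, sub_sub_sub_comm]
    exact norm_add_le_norm_sub_iff_inner_nonpos.2 (hF z z')
  obtain ⟨x, hx⟩ := exists_forall_norm_sub_le_of_forall_norm_sub_le norm_add_sub_le 0
  refine ⟨(2⁻¹ : ℝ) • x, fun z ↦ norm_add_le_norm_sub_iff_inner_nonpos.1 ?_⟩
  calc ‖F z - (2⁻¹ : ℝ) • x + (z - (2⁻¹ : ℝ) • x)‖
      = ‖x - (F z + z)‖ := by rw [norm_sub_rev]; congr 1; module
    _ ≤ ‖0 - (F z - z)‖ := hx z
    _ = ‖F z - (2⁻¹ : ℝ) • x - (z - (2⁻¹ : ℝ) • x)‖ := by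
      rw [zero_sub, norm_neg, sub_sub_sub_cancel_right]

theorem existsUnique_isFixedPt [CompleteSpace E] (hF : IsDissipative F)
    (hFhemi : IsHemicontinuous F) : ∃! x, F x = x := by
  obtain ⟨x, hx⟩ := hF.exists_forall_inner_sub_nonpos
  have hxfix := hFhemi.eq_of_forall_inner_sub_nonpos hx
  exact ⟨x, hxfix, fun _ hy ↦ hF.eq_of_isFixedPt hy hxfix⟩

end IsDissipative

theorem stmt_0_general [CompleteSpace E] (hF : IsDissipative F) (hFhemi : IsHemicontinuous F)
    {ε : ℝ} (hε : 0 ≤ ε) (y : E) : ∃! x, x - ε • F x = y := by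
  have isFixedPt_iff (x : E) : ε • F x + y = x ↔ x - ε • F x = y := by
    rw [eq_comm, sub_eq_iff_eq_add']
  simpa only [isFixedPt_iff] using
    (hF.smul_add_const hε y).existsUnique_isFixedPt (hFhemi.smul_add_const ε y)

end Dissipative

/-- For `n ≥ 1` and a continuous dissipative map `F : ℝⁿ → ℝⁿ`, for every `ε > 0` and
every `y` there exists a unique `x` with `x - ε • F x = y`. -/
theorem stmt_0 (n : ℕ) (hn : 1 ≤ n)
    (F : EuclideanSpace ℝ (Fin n) → EuclideanSpace ℝ (Fin n))
    (hFcont : Continuous F)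
    (hFdiss : ∀ x y : EuclideanSpace ℝ (Fin n),
      (inner ℝ (F x - F y) (x - y) : ℝ) ≤ 0)
    (ε : ℝ) (hε : 0 < ε) (y : EuclideanSpace ℝ (Fin n)) :
    ∃! x : EuclideanSpace ℝ (Fin n), x - ε • F x = y :=
  stmt_0_general hFdiss (.of_continuous hFcont) hε.le y
end

section
/- Let F : ℝⁿ → ℝⁿ be continuous and dissipative, and for each ε > 0 let J^ε : ℝⁿ → ℝⁿ satisfy J^ε(y) − ε·F(J^ε(y)) = y for all y, with F^ε := F ∘ J^ε. If x ∈ ℝⁿ and (x^ε)_{ε>0} is a family in ℝⁿ with x^ε → x as ε → 0⁺, then F^ε(x^ε) → F(x) as ε → 0⁺. -/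
open Filter Topology

/-!
A dissipative `F` makes `id - ε • F` expand distances. Since `id - ε • F` maps `J ε (xε ε)` to
`xε ε` and `x` to `x - ε • F x`, this gives `‖J ε (xε ε) - x‖ ≤ ‖xε ε - (x - ε • F x)‖ → 0`, and
continuity of `F` at `x` concludes.
-/

/-- `F` is dissipative relative to the point `x`: for every `t ≥ 0`, the map `id - t • F` does not
decrease distances to `x`. This is the norm formulation of dissipativity, which makes sense without
an inner product; over an inner product space it is implied by `⟪F y - F x, y - x⟫ ≤ 0`. -/
def DissipativeAt {E : Type*} [SeminormedAddCommGroup E] [NormedSpace ℝ E]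
    (F : E → E) (x : E) : Prop :=
  ∀ ⦃t : ℝ⦄, 0 ≤ t → ∀ y, ‖y - x‖ ≤ ‖(y - t • F y) - (x - t • F x)‖

section InnerProductSpace

variable {E : Type*} [SeminormedAddCommGroup E] [InnerProductSpace ℝ E]

theorem norm_le_norm_sub_of_inner_nonpos {v w : E} (h : inner ℝ v w ≤ 0) : ‖v‖ ≤ ‖v - w‖ := by
  refine le_of_sq_le_sq ?_ (norm_nonneg _)
  calc ‖v‖ ^ 2 ≤ ‖v‖ ^ 2 - 2 * inner ℝ v w + ‖w‖ ^ 2 := by linarith [sq_nonneg ‖w‖]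
    _ = ‖v - w‖ ^ 2 := (norm_sub_sq_real v w).symm

theorem DissipativeAt.of_inner_nonpos {F : E → E} {x : E}
    (hF : ∀ y, inner ℝ (F y - F x) (y - x) ≤ 0) : DissipativeAt F x := by
  intro t ht y
  have h : inner ℝ (y - x) (t • (F y - F x)) ≤ 0 := by
    rw [real_inner_smul_right, real_inner_comm]
    exact mul_nonpos_of_nonneg_of_nonpos ht (hF y)
  calc ‖y - x‖ ≤ ‖(y - x) - t • (F y - F x)‖ := norm_le_norm_sub_of_inner_nonpos h
    _ = ‖(y - t • F y) - (x - t • F x)‖ := by rw [smul_sub, sub_sub_sub_comm]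

end InnerProductSpace

section NormedSpace

variable {E : Type*} [SeminormedAddCommGroup E] [NormedSpace ℝ E] {F : E → E} {x : E}

theorem DissipativeAt.tendsto_of_tendsto_sub_smul {ι : Type*} {l : Filter ι} {t : ι → ℝ}
    {u : ι → E} (hF : DissipativeAt F x) (ht : Tendsto t l (𝓝[≥] 0))
    (hu : Tendsto (fun i ↦ u i - t i • F (u i)) l (𝓝 x)) : Tendsto u l (𝓝 x) := by
  obtain ⟨ht₀, ht_nonneg⟩ := tendsto_nhdsWithin_iff.mp ht
  have hx : Tendsto (fun i ↦ x - t i • F x) l (𝓝 x) := by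
    simpa using (ht₀.smul_const (F x)).const_sub x
  have hbound : Tendsto (fun i ↦ ‖(u i - t i • F (u i)) - (x - t i • F x)‖) l (𝓝 0) := by
    simpa using (hu.sub hx).norm
  rw [tendsto_iff_norm_sub_tendsto_zero]
  exact squeeze_zero' (.of_forall fun _ ↦ norm_nonneg _) (ht_nonneg.mono fun i hi ↦ hF hi (u i))
    hbound

theorem stmt_7_general (hFcont : ContinuousAt F x) (hFdiss : DissipativeAt F x) {J : ℝ → E → E}
    (hJ : ∀ ε : ℝ, 0 < ε → ∀ y, J ε y - ε • F (J ε y) = y) {xε : ℝ → E}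
    (hxε : Tendsto xε (𝓝[>] 0) (𝓝 x)) :
    Tendsto (fun ε ↦ (F ∘ J ε) (xε ε)) (𝓝[>] 0) (𝓝 (F x)) := by
  have hresolvent : xε =ᶠ[𝓝[>] 0] fun ε ↦ J ε (xε ε) - ε • F (J ε (xε ε)) :=
    eventually_mem_nhdsWithin.mono fun ε hε ↦ (hJ ε hε (xε ε)).symm
  have hJx : Tendsto (fun ε ↦ J ε (xε ε)) (𝓝[>] 0) (𝓝 x) :=
    hFdiss.tendsto_of_tendsto_sub_smul (nhdsWithin_mono 0 Set.Ioi_subset_Ici_self)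
      (hxε.congr' hresolvent)
  exact hFcont.tendsto.comp hJx

end NormedSpace

/-- If `xᵉ → x` as `ε → 0⁺`, then the Yosida approximations satisfy
`Fᵉ(xᵉ) = F (J ε (xᵉ)) → F x` as `ε → 0⁺`. -/
theorem stmt_7 (n : ℕ)
    (F : EuclideanSpace ℝ (Fin n) → EuclideanSpace ℝ (Fin n))
    (hFcont : Continuous F)
    (hFdiss : ∀ x y : EuclideanSpace ℝ (Fin n),
      (inner ℝ (F x - F y) (x - y) : ℝ) ≤ 0)
    (J : ℝ → EuclideanSpace ℝ (Fin n) → EuclideanSpace ℝ (Fin n))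
    (hJ : ∀ ε : ℝ, 0 < ε → ∀ y : EuclideanSpace ℝ (Fin n),
      J ε y - ε • F (J ε y) = y)
    (x : EuclideanSpace ℝ (Fin n)) (xε : ℝ → EuclideanSpace ℝ (Fin n))
    (hxε : Tendsto xε (𝓝[>] 0) (𝓝 x)) :
    Tendsto (fun ε : ℝ => (F ∘ J ε) (xε ε)) (𝓝[>] 0) (𝓝 (F x)) :=
  stmt_7_general hFcont.continuousAt (.of_inner_nonpos fun y ↦ hFdiss y x) hJ hxε
end

section
/- Let f : ℝ × ℝ^d → ℝ be continuous, let a ≥ 0, C ≥ 0 be constants and φ : [0,∞) → [0,∞) a nondecreasing continuous function, and assume |f(y,z)| ≤ a + φ(|y|) + C·|z| for all (y,z) and (y − y')·(f(y,z) − f(y',z)) ≤ 0 for all y, y', z. For a real number n ≥ C define f_n(y,z) := sup_{q ∈ ℝ^d} ( f(y,q) − n·|z − q| ). Then for every (y,z): the supremum is finite; f(y,z) ≤ f_n(y,z); (y − y')·(f_n(y,z) − f_n(y',z)) ≤ 0 for all y, y', z; |f_n(y,z) − f_n(y,z')| ≤ n·|z − z'| for all y, z, z'; and |f_n(y,z)|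 ≤ a + φ(|y|) + C·|z|. -/
/-!
The sup-convolution of `g` with slope `K` is the least `K`-Lipschitz majorant of `g`. The growth
hypothesis bounds `|f y|` by the `C`-Lipschitz function `z ↦ a + φ |y| + C * ‖z‖`, which is also
`n`-Lipschitz, so the regularization of `f y` lies between `f y` and this function. It is monotone
in `y` because sup-convolution preserves pointwise inequalities between functions of `z`.
-/

open Set
open scoped NNReal

section SupConvolution

variable {X : Type*} [PseudoMetricSpace X] {K : ℝ≥0} {g₁ g₂ g h : X → ℝ}

/-- The sup-convolution (Lipschitz regularization from above) of `g` with slope `K`, where the slope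
is nonnegative by its type. The value at a point where the supremum is infinite is `0`. -/
noncomputable def supConvolution (K : ℝ≥0) (g : X → ℝ) (z : X) : ℝ :=
  ⨆ q, (g q - K * dist z q)

theorem sub_mul_dist_le_of_le_lipschitzWith (hh : LipschitzWith K h) (hgh : g ≤ h) (z q : X) :
    g q - K * dist z q ≤ h z := by
  rw [sub_le_iff_le_add, dist_comm]
  exact (hgh q).trans (hh.le_add_mul q z)

theorem bddAbove_range_sub_mul_dist (hh : LipschitzWith K h) (hgh : g ≤ h) (z : X) :
    BddAbove (range fun q => g q - K * dist z q) :=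
  ⟨h z, forall_mem_range.2 (sub_mul_dist_le_of_le_lipschitzWith hh hgh z)⟩

theorem supConvolution_le_of_le_lipschitzWith (hh : LipschitzWith K h) (hgh : g ≤ h) :
    supConvolution K g ≤ h := fun z =>
  have : Nonempty X := ⟨z⟩
  ciSup_le (sub_mul_dist_le_of_le_lipschitzWith hh hgh z)

theorem le_supConvolution {z : X} (hg : BddAbove (range fun q => g q - K * dist z q)) :
    g z ≤ supConvolution K g z := by
  simpa only [supConvolution, dist_self, mul_zero, sub_zero] using le_ciSup hg z

theorem supConvolution_mono {z : X} (hg₂ : BddAbove (range fun q => g₂ q - K * dist z q))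
    (hle : g₁ ≤ g₂) : supConvolution K g₁ z ≤ supConvolution K g₂ z :=
  ciSup_mono hg₂ fun q => sub_le_sub_right (hle q) _

theorem lipschitzWith_supConvolution (hg : ∀ z, BddAbove (range fun q => g q - K * dist z q)) :
    LipschitzWith K (supConvolution K g) := by
  refine LipschitzWith.of_le_add_mul K fun z z' => ?_
  have : Nonempty X := ⟨z⟩
  refine ciSup_le fun q => ?_
  have hdist : K * dist z' q ≤ K * (dist z z' + dist z q) := by
    gcongr
    exact dist_triangle_left z' q z
  calc
    g q - K * dist z q ≤ g q - K * dist z' q + K * dist z z' := by linarith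
    _ ≤ supConvolution K g z' + K * dist z z' := by
      gcongr
      exact le_ciSup (hg z') q

end SupConvolution

theorem lipschitzWith_const_add_mul_norm {E : Type*} [SeminormedAddGroup E] (b : ℝ) (C : ℝ≥0) :
    LipschitzWith C fun z : E => b + C * ‖z‖ := by
  refine LipschitzWith.of_le_add_mul C fun z z' => ?_
  have hnorm : ‖z‖ ≤ ‖z'‖ + dist z z' := by
    simpa only [NNReal.coe_one, one_mul] using lipschitzWith_one_norm.le_add_mul z z'
  rw [add_assoc, ← mul_add]
  gcongr

theorem antitone_iff_forall_sub_mul_sub_nonpos {R ι : Type*} [Ring R] [LinearOrder R]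
    [IsStrictOrderedRing R] {f : R → ι → R} :
    Antitone f ↔ ∀ y y' z, (y - y') * (f y z - f y' z) ≤ 0 := by
  have antitone_iff_antivary (z : ι) : Antitone (f · z) ↔ Antivary id (f · z) :=
    antivary_id_iff.symm.trans antivary_comm
  simp only [antitone_iff_apply₂, antitone_iff_antivary, antivary_iff_forall_mul_nonpos, id_eq]
  exact ⟨fun H y y' z => H z y' y, fun H z y y' => H y' y z⟩

theorem stmt_8_general {X Y : Type*} [PseudoMetricSpace X] [Preorder Y] {K : ℝ≥0}
    {f h : Y → X → ℝ} (hh : ∀ y, LipschitzWith K (h y)) (hfh : ∀ y z, |f y z| ≤ h y z)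
    (hf : Antitone f) :
    (∀ y z, BddAbove (range fun q => f y q - K * dist z q)) ∧
    (∀ y z, f y z ≤ supConvolution K (f y) z) ∧
    Antitone (fun y => supConvolution K (f y)) ∧
    (∀ y, LipschitzWith K (supConvolution K (f y))) ∧
    (∀ y z, |supConvolution K (f y) z| ≤ h y z) := by
  have f_le_h (y : Y) : f y ≤ h y := fun z => (abs_le.1 (hfh y z)).2
  have hbdd (y : Y) := bddAbove_range_sub_mul_dist (hh y) (f_le_h y)
  have f_le (y : Y) (z : X) := le_supConvolution (hbdd y z)
  exact ⟨hbdd, f_le, fun y _ hy z => supConvolution_mono (hbdd y z) (hf hy),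
    fun y => lipschitzWith_supConvolution (hbdd y),
    fun y z => abs_le.2 ⟨(abs_le.1 (hfh y z)).1.trans (f_le y z),
      supConvolution_le_of_le_lipschitzWith (hh y) (f_le_h y) z⟩⟩

/-- Properties of the sup-convolution `f_n(y,z) = ⨆ q, (f y q - n‖z - q‖)` of a
continuous generator `f` that is monotone (decreasing) in `y` and of general growth in `y`
and linear growth in `z`. -/
theorem stmt_8 (d : ℕ)
    (f : ℝ → EuclideanSpace ℝ (Fin d) → ℝ)
    (hfcont : Continuous fun p : ℝ × EuclideanSpace ℝ (Fin d) => f p.1 p.2)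
    (a C : ℝ) (ha : 0 ≤ a) (hC : 0 ≤ C)
    (φ : ℝ → ℝ)
    (hφmono : MonotoneOn φ (Set.Ici 0))
    (hφcont : ContinuousOn φ (Set.Ici 0))
    (hφnonneg : ∀ u : ℝ, 0 ≤ u → 0 ≤ φ u)
    (hgrowth : ∀ (y : ℝ) (z : EuclideanSpace ℝ (Fin d)),
      |f y z| ≤ a + φ |y| + C * ‖z‖)
    (hmono : ∀ (y y' : ℝ) (z : EuclideanSpace ℝ (Fin d)),
      (y - y') * (f y z - f y' z) ≤ 0)
    (n : ℝ) (hn : C ≤ n) :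
    (∀ (y : ℝ) (z : EuclideanSpace ℝ (Fin d)),
        BddAbove (Set.range fun q : EuclideanSpace ℝ (Fin d) => f y q - n * ‖z - q‖)) ∧
    (∀ (y : ℝ) (z : EuclideanSpace ℝ (Fin d)),
        f y z ≤ ⨆ q : EuclideanSpace ℝ (Fin d), (f y q - n * ‖z - q‖)) ∧
    (∀ (y y' : ℝ) (z : EuclideanSpace ℝ (Fin d)),
        (y - y') *
          ((⨆ q : EuclideanSpace ℝ (Fin d), (f y q - n * ‖z - q‖)) -
            (⨆ q : EuclideanSpace ℝ (Fin d), (f y' q - n * ‖z - q‖))) ≤ 0) ∧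
    (∀ (y : ℝ) (z z' : EuclideanSpace ℝ (Fin d)),
        |(⨆ q : EuclideanSpace ℝ (Fin d), (f y q - n * ‖z - q‖)) -
            (⨆ q : EuclideanSpace ℝ (Fin d), (f y q - n * ‖z' - q‖))| ≤ n * ‖z - z'‖) ∧
    (∀ (y : ℝ) (z : EuclideanSpace ℝ (Fin d)),
        |⨆ q : EuclideanSpace ℝ (Fin d), (f y q - n * ‖z - q‖)| ≤ a + φ |y| + C * ‖z‖) := by
  lift n to ℝ≥0 using hC.trans hn
  lift C to ℝ≥0 using hC
  simpa only [antitone_iff_forall_sub_mul_sub_nonpos, lipschitzWith_iff_dist_le_mul, dist_eq_norm,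
    Real.norm_eq_abs, supConvolution] using
    stmt_8_general (fun y => (lipschitzWith_const_add_mul_norm (a + φ |y|) C).weaken hn) hgrowth
      (antitone_iff_forall_sub_mul_sub_nonpos.2 hmono)
end
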